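/- Let w : ℝ → ℝ be positive and differentiable, let x₁,…,xₙ be distinct real numbers with fundamental Lagrange polynomials l_k(x) = ∏_{l≠k}(x − x_l)/(x_k − x_l), and suppose all Fejér constants vanish: 2·∑_{l≠k} 1/(x_k − x_l) + w'(x_k)/w(x_k) = 0 for k = 1,…,n. Then the polynomial P(x) = ∑_{k=1}^n l_k(x)²/w(x_k) (of degree at most 2n−2) is the Hermite interpolation polynomial of 1/w at the nodes: P(x_k) = 1/w(x_k) and P'(x_k) = (1/w)'(x_k) = −w'(x_k)/w(x_k)² for every k. -/

import Mathlib

open Real Filter Set Finset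

/-!
At its own node `x k` the polynomial `l k` takes the value `1`, while all the other `l i` vanish
there. Since the `l i` enter squared, only the `k`-th term contributes to the value and to the
derivative of `P` at `x k`, so `P (x k) = 1 / w (x k)` and `P' (x k) = 2 (l k)' (x k) / w (x k)`.
As `(l k)' (x k) = ∑ j ≠ k, 1 / (x k - x j)`, the error `P' (x k) - (1 / w)' (x k)` is the Fejér
constant at `x k` divided by `w (x k)`.
-/

open Polynomial

section Algebra

variable {F ι : Type*} [Field F] [DecidableEq ι] {s : Finset ι} {x : ι → F} {k : ι}

theorem eval_lagrangeBasis (s : Finset ι) (x : ι → F) (k : ι) (t : F) :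
    (Lagrange.basis s x k).eval t = ∏ j ∈ s.erase k, (t - x j) / (x k - x j) := by
  simp [Lagrange.basis, Lagrange.basisDivisor, eval_prod, div_eq_inv_mul]

theorem eval_derivative_lagrangeBasis_self (hx : Set.InjOn x s) (hk : k ∈ s) :
    (derivative (Lagrange.basis s x k)).eval (x k) = ∑ j ∈ s.erase k, 1 / (x k - x j) := by
  have eval_divisor : ∀ j ∈ s.erase k, (Lagrange.basisDivisor (x k) (x j)).eval (x k) = 1 :=
    fun j hj ↦ Lagrange.eval_basisDivisor_left_of_ne <|
      hx.ne hk (mem_of_mem_erase hj) (ne_of_mem_erase hj).symm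
  have derivative_divisor (j : ι) :
      derivative (Lagrange.basisDivisor (x k) (x j)) = C (1 / (x k - x j)) := by
    simp [Lagrange.basisDivisor]
  rw [Lagrange.basis, derivative_prod_finset, eval_finsetSum]
  refine sum_congr rfl fun j _ ↦ ?_
  rw [eval_mul, eval_prod, prod_eq_one fun i hi ↦ eval_divisor i (mem_of_mem_erase hi), one_mul,
    derivative_divisor, eval_C]

/-- The Grünwald kernel `∑ i ∈ s, l i ^ 2 / w (x i)` of the weight `w` at the nodes `x i`, `i ∈ s`,
as a polynomial; the `l i` are the fundamental Lagrange polynomials. -/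
noncomputable def grunwaldKernel (s : Finset ι) (x : ι → F) (w : F → F) : F[X] :=
  ∑ i ∈ s, C (1 / w (x i)) * Lagrange.basis s x i ^ 2

theorem eval_grunwaldKernel (s : Finset ι) (x : ι → F) (w : F → F) (t : F) :
    (grunwaldKernel s x w).eval t = ∑ i ∈ s, (Lagrange.basis s x i).eval t ^ 2 / w (x i) := by
  simp [grunwaldKernel, eval_finsetSum, div_eq_inv_mul]

theorem degree_grunwaldKernel_lt (hx : Set.InjOn x s) (w : F → F) :
    (grunwaldKernel s x w).degree < (2 * #s : ℕ) := by
  refine mem_degreeLT.1 <| Submodule.sum_mem _ fun i hi ↦ mem_degreeLT.2 ?_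
  have natDegree_le : (C (1 / w (x i)) * Lagrange.basis s x i ^ 2).natDegree ≤ 2 * (#s - 1) :=
    (natDegree_C_mul_le _ _).trans <|
      natDegree_pow_le_of_le 2 (Lagrange.natDegree_basis hx hi).le
  have card_pos : 0 < #s := card_pos.2 ⟨i, hi⟩
  exact (degree_le_of_natDegree_le natDegree_le).trans_lt (by norm_cast; lia)

theorem eval_grunwaldKernel_node (hx : Set.InjOn x s) (w : F → F) (hk : k ∈ s) :
    (grunwaldKernel s x w).eval (x k) = 1 / w (x k) := by
  rw [eval_grunwaldKernel, sum_eq_single_of_mem k hk, Lagrange.eval_basis_self hx hk, one_pow]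
  intro i _ hik
  simp [Lagrange.eval_basis_of_ne hik hk]

theorem eval_derivative_grunwaldKernel_node (hx : Set.InjOn x s) (w : F → F) (hk : k ∈ s) :
    (derivative (grunwaldKernel s x w)).eval (x k) =
      2 * (∑ j ∈ s.erase k, 1 / (x k - x j)) / w (x k) := by
  have eval_derivative_term (i : ι) :
      (derivative (C (1 / w (x i)) * Lagrange.basis s x i ^ 2)).eval (x k) =
        2 * (Lagrange.basis s x i).eval (x k) * (derivative (Lagrange.basis s x i)).eval (x k) /
          w (x i) := by
    simp [derivative_pow, div_eq_inv_mul]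
  simp only [grunwaldKernel, derivative_sum, eval_finsetSum, eval_derivative_term]
  rw [sum_eq_single_of_mem k hk, Lagrange.eval_basis_self hx hk, mul_one,
    eval_derivative_lagrangeBasis_self hx hk]
  intro i _ hik
  simp [Lagrange.eval_basis_of_ne hik hk]

end Algebra

section Calculus

variable {𝕜 ι : Type*} [NontriviallyNormedField 𝕜] {s : Finset ι} {x : ι → 𝕜} {w : 𝕜 → 𝕜} {k : ι}

theorem hasDerivAt_one_div {a : 𝕜} (hw_ne : w a ≠ 0) (hw_diff : DifferentiableAt 𝕜 w a) :
    HasDerivAt (fun t ↦ 1 / w t) (-deriv w a / w a ^ 2) a := by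
  simpa only [one_div] using hw_diff.hasDerivAt.fun_inv hw_ne

/-- `P` is the Hermite interpolation polynomial of `g` at the nodes `x i`, `i ∈ s`. The degree bound
is strict to avoid the truncated subtraction in `2 * #s - 1`, and the derivative condition is a
`HasDerivAt`, so that it includes the differentiability of `g` at the nodes. -/
structure IsHermiteInterpolant (s : Finset ι) (x : ι → 𝕜) (g : 𝕜 → 𝕜) (P : 𝕜[X]) : Prop where
  degree_lt : P.degree < (2 * #s : ℕ)
  eval_eq : ∀ k ∈ s, P.eval (x k) = g (x k)
  hasDerivAt : ∀ k ∈ s, HasDerivAt g ((derivative P).eval (x k)) (x k)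

variable [DecidableEq ι]

/-- The Fejér constant `C_{k,w}` of the weight `w` at the node `x k`, for the nodes `x i`,
`i ∈ s`. -/
noncomputable def fejerConstant (s : Finset ι) (x : ι → 𝕜) (w : 𝕜 → 𝕜) (k : ι) : 𝕜 :=
  2 * ∑ j ∈ s.erase k, 1 / (x k - x j) + deriv w (x k) / w (x k)

theorem eval_derivative_grunwaldKernel_eq_fejerConstant (hx : Set.InjOn x s) (hk : k ∈ s) :
    (derivative (grunwaldKernel s x w)).eval (x k) =
      fejerConstant s x w k / w (x k) + -deriv w (x k) / w (x k) ^ 2 := by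
  rw [eval_derivative_grunwaldKernel_node hx w hk, fejerConstant]
  ring

theorem grunwald_kernel_is_hermite_interpolant_general (hx : Set.InjOn x s)
    (hw_ne : ∀ k ∈ s, w (x k) ≠ 0) (hw_diff : ∀ k ∈ s, DifferentiableAt 𝕜 w (x k))
    (hfejer : ∀ k ∈ s, fejerConstant s x w k = 0) :
    IsHermiteInterpolant s x (fun t ↦ 1 / w t) (grunwaldKernel s x w) where
  degree_lt := degree_grunwaldKernel_lt hx w
  eval_eq _ hk := eval_grunwaldKernel_node hx w hk
  hasDerivAt k hk := by
    rw [eval_derivative_grunwaldKernel_eq_fejerConstant hx hk, hfejer k hk, zero_div, zero_add]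
    exact hasDerivAt_one_div (hw_ne k hk) (hw_diff k hk)

end Calculus

/-- If all Fejér constants vanish, then the Grünwald kernel
`P(x) = ∑ₖ lₖ(x)²/w(xₖ)` is the Hermite interpolation polynomial of `1/w` at the nodes:
`P(xₖ) = 1/w(xₖ)` and `P'(xₖ) = (1/w)'(xₖ) = -w'(xₖ)/w(xₖ)²` for every `k`. -/
theorem grunwald_kernel_is_hermite_interpolant
    (w : ℝ → ℝ) (hw_pos : ∀ x, 0 < w x) (hw_diff : Differentiable ℝ w)
    (n : ℕ) (x : Fin n → ℝ) (hinj : Function.Injective x)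
    (l : Fin n → ℝ → ℝ)
    (hl : ∀ k t, l k t = ∏ j ∈ Finset.univ.erase k, (t - x j) / (x k - x j))
    (hfejer : ∀ k : Fin n,
      2 * ∑ j ∈ Finset.univ.erase k, 1 / (x k - x j) + deriv w (x k) / w (x k) = 0)
    (P : ℝ → ℝ) (hP : ∀ t, P t = ∑ k, (l k t) ^ 2 / w (x k)) :
    ∀ k : Fin n, P (x k) = 1 / w (x k) ∧ deriv P (x k) = -deriv w (x k) / (w (x k)) ^ 2 := by
  have hermite : IsHermiteInterpolant univ x (fun t ↦ 1 / w t) (grunwaldKernel univ x w) :=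
    grunwald_kernel_is_hermite_interpolant_general hinj.injOn (fun k _ ↦ (hw_pos (x k)).ne')
      (fun k _ ↦ hw_diff (x k)) fun k _ ↦ hfejer k
  have P_eq_eval : P = fun t ↦ (grunwaldKernel univ x w).eval t := by
    funext t
    simp only [hP, hl, eval_grunwaldKernel, eval_lagrangeBasis]
  intro k
  rw [P_eq_eval, Polynomial.deriv]
  exact ⟨hermite.eval_eq k (mem_univ k), (hermite.hasDerivAt k (mem_univ k)).unique
    (hasDerivAt_one_div (hw_pos (x k)).ne' (hw_diff (x k)))⟩
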